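/- Let ε = max_{s∈S} | ∑_{a∈A} π̃(a|s) A^π(s,a) |. Then for any two policies π and π̃, | η(π̃) − η(π) − L_π(π̃) | ≤ (2 ε γ / (1−γ)²) · ∑_{s∈S} d^π(s) · D_TV(π̃(·|s) ‖ π(·|s)). -/

import Mathlib

open scoped BigOperators

namespace PolicyOpt

/-- A finite Markov decision process. -/
structure MDP (S A : Type*) [Fintype S] [Fintype A] where
  p : S → A → S → ℝ
  r : S → A → ℝ
  γ : ℝ
  μ0 : S → ℝ
  p_nonneg : ∀ s a s', 0 ≤ p s a s'
  p_sum_one : ∀ s a, ∑ s', p s a s' = 1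
  μ0_nonneg : ∀ s, 0 ≤ μ0 s
  μ0_sum_one : ∑ s, μ0 s = 1
  γ_pos : 0 < γ
  γ_lt_one : γ < 1

variable {S A : Type*} [Fintype S] [Fintype A] [DecidableEq S] [DecidableEq A]

/-- A policy assigns to every state a probability distribution over actions. -/
def IsPolicy (π : S → A → ℝ) : Prop :=
  (∀ s a, 0 ≤ π s a) ∧ ∀ s, ∑ a, π s a = 1

/-- Trajectory prefixes (histories) consisting of `t+1` state-action pairs. -/
abbrev Hist (S A : Type*) (t : ℕ) := Fin (t + 1) → S × A

/-- Probability of a history of length `t+1` when following policy `π`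
starting from the initial distribution `μ0`. -/
noncomputable def prob (M : MDP S A) (π : S → A → ℝ) (t : ℕ) (h : Hist S A t) : ℝ :=
  (M.μ0 (h 0).1 * π (h 0).1 (h 0).2) *
    ∏ i : Fin t,
      (M.p (h i.castSucc).1 (h i.castSucc).2 (h i.succ).1 * π (h i.succ).1 (h i.succ).2)

/-- Probability of a history of length `t+1` when following policy `π`,
conditioned on starting in state `s` with first action `a`. -/
noncomputable def probFrom (M : MDP S A) (π : S → A → ℝ) (s : S) (a : A) (t : ℕ) (h : Hist S A t) : ℝ :=
  (if h 0 = (s, a) then (1 : ℝ) else 0) *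
    ∏ i : Fin t,
      (M.p (h i.castSucc).1 (h i.castSucc).2 (h i.succ).1 * π (h i.succ).1 (h i.succ).2)

/-- The last state-action pair of a history. -/
def lastSA {t : ℕ} (h : Hist S A t) : S × A := h (Fin.last t)

/-- State-action value `Q^π(s,a) = E_{τ∼π}[∑_{t≥0} γ^t r(s_t,a_t) | s₀=s, a₀=a]`. -/
noncomputable def Qval (M : MDP S A) (π : S → A → ℝ) (s : S) (a : A) : ℝ :=
  ∑' t : ℕ, M.γ ^ t * ∑ h : Hist S A t, probFrom M π s a t h * M.r (lastSA h).1 (lastSA h).2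

/-- State value `V^π(s)`. -/
noncomputable def Vval (M : MDP S A) (π : S → A → ℝ) (s : S) : ℝ :=
  ∑ a, π s a * Qval M π s a

/-- Advantage `A^π(s,a) = Q^π(s,a) - V^π(s)`. -/
noncomputable def Adv (M : MDP S A) (π : S → A → ℝ) (s : S) (a : A) : ℝ :=
  Qval M π s a - Vval M π s

/-- The value `η(π) = E_{τ∼π} ∑_{t≥0} γ^t r(s_t,a_t)`. -/
noncomputable def ηval (M : MDP S A) (π : S → A → ℝ) : ℝ :=
  ∑' t : ℕ, M.γ ^ t * ∑ h : Hist S A t, prob M π t h * M.r (lastSA h).1 (lastSA h).2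

/-- Normalised discounted state occupancy measure
`d^π(s) = (1-γ) ∑_{t≥0} γ^t Pr_{τ∼π}(s_t = s)`. -/
noncomputable def dOcc (M : MDP S A) (π : S → A → ℝ) (s : S) : ℝ :=
  (1 - M.γ) * ∑' t : ℕ, M.γ ^ t *
    ∑ h : Hist S A t, prob M π t h * (if (lastSA h).1 = s then (1 : ℝ) else 0)

/-- The surrogate objective `L_π(π') = (1/(1-γ)) ∑_s d^π(s) ∑_a π'(a|s) A^π(s,a)`. -/
noncomputable def Lsur (M : MDP S A) (π π' : S → A → ℝ) : ℝ :=
  (1 - M.γ)⁻¹ * ∑ s, dOcc M π s * ∑ a, π' s a * Adv M π s a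

/-- Product of importance sampling ratios `ρ_{0:t}` along a history. -/
noncomputable def ρprod (π π' : S → A → ℝ) {t : ℕ} (h : Hist S A t) : ℝ :=
  ∏ i, π' (h i).1 (h i).2 / π (h i).1 (h i).2

/-- Smoothed product of importance sampling ratios `ρ^{α}_{0:t}`. -/
noncomputable def ρpow (π π' : S → A → ℝ) {t : ℕ} (α : Fin (t + 1) → ℝ) (h : Hist S A t) : ℝ :=
  ∏ i, (π' (h i).1 (h i).2 / π (h i).1 (h i).2) ^ (α i)

/-- The prefix of length `t+1` of a history of length `T+1` (for `t ≤ T`). -/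
def pref {T : ℕ} (h : Hist S A T) (t : Fin (T + 1)) : Hist S A (t : ℕ) :=
  fun i => h (Fin.castLE t.isLt i)


/-- State-action transition operator. -/
noncomputable def Kop (M : MDP S A) (π : S → A → ℝ) (f : S × A → ℝ) : S × A → ℝ :=
  fun x => ∑ y : S × A, M.p x.1 x.2 y.1 * π y.1 y.2 * f y

/-- State transition operator. -/
noncomputable def Top (M : MDP S A) (π : S → A → ℝ) (g : S → ℝ) : S → ℝ :=
  fun s => ∑ a, π s a * ∑ s', M.p s a s' * g s'

/-- Averaging over actions. -/
noncomputable def avg (π : S → A → ℝ) (f : S × A → ℝ) : S → ℝ :=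
  fun s => ∑ a, π s a * f (s, a)

lemma avg_Kop (M : MDP S A) (π : S → A → ℝ) (f : S × A → ℝ) :
    avg π (Kop M π f) = Top M π (avg π f) := by
  funext s
  simp only [avg, Kop, Top, Fintype.sum_prod_type, Finset.mul_sum, mul_assoc]

lemma avg_Kop_iter (M : MDP S A) (π : S → A → ℝ) (t : ℕ) (f : S × A → ℝ) :
    avg π ((Kop M π)^[t] f) = (Top M π)^[t] (avg π f) :=
  (Function.Semiconj.iterate_right (f := avg π) (fun f => avg_Kop M π f) t) f

lemma sum_hist (M : MDP S A) (π : S → A → ℝ) (w : S × A → ℝ) (t : ℕ) :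
    ∀ f : S × A → ℝ,
    ∑ h : Hist S A t, (w (h 0) *
    ∏ i : Fin t,
      (M.p (h i.castSucc).1 (h i.castSucc).2 (h i.succ).1 * π (h i.succ).1 (h i.succ).2))
      * f (lastSA h) = ∑ x, w x * (Kop M π)^[t] f x := by
  induction t with
  | zero =>
    intro f
    rw [← (Equiv.funUnique (Fin 1) (S × A)).symm.sum_comp]
    simp [lastSA]
  | succ t ih =>
    intro f
    rw [Function.iterate_succ_apply, ← ih]
    rw [← (Fin.snocEquiv (fun _ : Fin (t + 1 + 1) => S × A)).sum_comp, Fintype.sum_prod_type,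
      Finset.sum_comm]
    refine Finset.sum_congr rfl fun h _ => ?_
    simp only [Kop, Finset.mul_sum]
    refine Finset.sum_congr rfl fun y _ => ?_
    rw [Fin.prod_univ_castSucc]
    have h0 : ∀ i : Fin (t+1), (Fin.snoc (α := fun _ => S × A) h y : Fin (t+1+1) → S × A) i.castSucc = h i :=
      fun i => Fin.snoc_castSucc (α := fun _ => S × A) y h i
    have h00 : (Fin.snoc (α := fun _ => S × A) h y : Fin (t+1+1) → S × A) 0 = h 0 := h0 0
    have h1 : (Fin.snoc (α := fun _ => S × A) h y : Fin (t+1+1) → S × A) (Fin.last (t+1)) = y :=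
      Fin.snoc_last (α := fun _ => S × A) y h
    simp only [Fin.snocEquiv, Equiv.coe_fn_mk, lastSA, h00, h0, h1, Fin.succ_castSucc, Fin.succ_last]
    ring

lemma Top_bdd (M : MDP S A) {π : S → A → ℝ} (hπ : IsPolicy π) {g : S → ℝ} {C : ℝ}
    (hg : ∀ s, |g s| ≤ C) (s : S) : |Top M π g s| ≤ C := by
  have h1 : ∀ a, |∑ s', M.p s a s' * g s'| ≤ C := fun a => by
    calc _ ≤ ∑ s', |M.p s a s' * g s'| := Finset.abs_sum_le_sum_abs _ _
      _ ≤ ∑ s', M.p s a s' * C := Finset.sum_le_sum fun s' _ => by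
          rw [abs_mul, abs_of_nonneg (M.p_nonneg _ _ _)]
          exact mul_le_mul_of_nonneg_left (hg s') (M.p_nonneg _ _ _)
      _ = C := by rw [← Finset.sum_mul, M.p_sum_one, one_mul]
  calc _ ≤ ∑ a, |π s a * ∑ s', M.p s a s' * g s'| := Finset.abs_sum_le_sum_abs _ _
    _ ≤ ∑ a, π s a * C := Finset.sum_le_sum fun a _ => by
          rw [abs_mul, abs_of_nonneg (hπ.1 _ _)]
          exact mul_le_mul_of_nonneg_left (h1 a) (hπ.1 _ _)
    _ = C := by rw [← Finset.sum_mul, hπ.2, one_mul]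

lemma Kop_bdd (M : MDP S A) {π : S → A → ℝ} (hπ : IsPolicy π) {f : S × A → ℝ} {C : ℝ}
    (hf : ∀ x, |f x| ≤ C) (x : S × A) : |Kop M π f x| ≤ C := by
  calc _ ≤ ∑ y : S × A, |M.p x.1 x.2 y.1 * π y.1 y.2 * f y| := Finset.abs_sum_le_sum_abs _ _
    _ ≤ ∑ y : S × A, M.p x.1 x.2 y.1 * π y.1 y.2 * C := Finset.sum_le_sum fun y _ => by
          have := mul_nonneg (M.p_nonneg x.1 x.2 y.1) (hπ.1 y.1 y.2)
          rw [abs_mul, abs_of_nonneg this]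
          exact mul_le_mul_of_nonneg_left (hf y) this
    _ = C := by
      rw [← Finset.sum_mul, Fintype.sum_prod_type]
      simp only [← Finset.mul_sum, hπ.2, mul_one, M.p_sum_one, one_mul]

lemma exists_bdd {X : Type*} [Fintype X] (f : X → ℝ) : ∃ C, ∀ x, |f x| ≤ C :=
  ⟨∑ x, |f x|, fun x => Finset.single_le_sum (f := fun x => |f x|)
    (fun _ _ => abs_nonneg _) (Finset.mem_univ x)⟩

lemma summable_geo (M : MDP S A) {u : ℕ → ℝ} {C : ℝ} (hu : ∀ t, |u t| ≤ C) :
    Summable fun t => M.γ ^ t * u t := by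
  refine Summable.of_norm_bounded (g := fun t => M.γ ^ t * C)
    ((summable_geometric_of_lt_one M.γ_pos.le M.γ_lt_one).mul_right C) fun t => ?_
  rw [Real.norm_eq_abs, abs_mul, abs_of_nonneg (pow_nonneg M.γ_pos.le t)]
  exact mul_le_mul_of_nonneg_left (hu t) (pow_nonneg M.γ_pos.le t)

lemma summable_K (M : MDP S A) {π : S → A → ℝ} (hπ : IsPolicy π) (f : S × A → ℝ) (x : S × A) :
    Summable fun t => M.γ ^ t * (Kop M π)^[t] f x := by
  obtain ⟨C, hC⟩ := exists_bdd f
  refine summable_geo M (C := C) fun t => ?_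
  induction t generalizing x with
  | zero => exact hC x
  | succ t ih => rw [Function.iterate_succ_apply']; exact Kop_bdd M hπ ih x

lemma summable_T (M : MDP S A) {π : S → A → ℝ} (hπ : IsPolicy π) (g : S → ℝ) (s : S) :
    Summable fun t => M.γ ^ t * (Top M π)^[t] g s := by
  obtain ⟨C, hC⟩ := exists_bdd g
  refine summable_geo M (C := C) fun t => ?_
  induction t generalizing s with
  | zero => exact hC s
  | succ t ih => rw [Function.iterate_succ_apply']; exact Top_bdd M hπ ih s

lemma tsum_shift (M : MDP S A) {u : ℕ → ℝ} (hu : Summable fun t => M.γ ^ t * u t) :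
    ∑' t, M.γ ^ t * u t = u 0 + M.γ * ∑' t, M.γ ^ t * u (t + 1) := by
  rw [hu.tsum_eq_zero_add, ← tsum_mul_left]
  simp only [pow_zero, one_mul, pow_succ]
  congr 1
  exact tsum_congr fun t => by ring

lemma Qval_eq (M : MDP S A) (π : S → A → ℝ) (s : S) (a : A) :
    Qval M π s a = ∑' t : ℕ, M.γ ^ t * (Kop M π)^[t] (fun x => M.r x.1 x.2) (s, a) := by
  unfold Qval
  refine tsum_congr fun t => ?_
  congr 1
  have := sum_hist M π (fun x => if x = (s, a) then (1:ℝ) else 0) t (fun x => M.r x.1 x.2)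
  simp only [ite_mul, one_mul, zero_mul, Finset.sum_ite_eq', Finset.mem_univ, if_true] at this
  rw [← this]
  exact Finset.sum_congr rfl fun h _ => by simp only [probFrom, ite_mul, one_mul, zero_mul]

lemma sum_prob (M : MDP S A) (π : S → A → ℝ) (t : ℕ) (f : S × A → ℝ) :
    ∑ h : Hist S A t, prob M π t h * f (lastSA h) = ∑ s, M.μ0 s * avg π ((Kop M π)^[t] f) s := by
  have := sum_hist M π (fun x => M.μ0 x.1 * π x.1 x.2) t f
  unfold prob
  rw [this, Fintype.sum_prod_type]
  simp only [avg, Finset.mul_sum, mul_assoc]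

lemma Q_bellman (M : MDP S A) {π : S → A → ℝ} (hπ : IsPolicy π) (s : S) (a : A) :
    Qval M π s a = M.r s a + M.γ * ∑ s', M.p s a s' * Vval M π s' := by
  rw [Qval_eq, tsum_shift M (summable_K M hπ _ _)]
  congr 2
  simp only [Function.iterate_succ_apply']
  simp only [Kop, Vval, Finset.mul_sum, Qval_eq]
  rw [Summable.tsum_finsetSum]
  · rw [Fintype.sum_prod_type]
    refine Finset.sum_congr rfl fun s' _ => Finset.sum_congr rfl fun a' _ => ?_
    rw [← tsum_mul_left, ← tsum_mul_left]
    exact tsum_congr fun t => by unfold Kop; ring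
  · intro y _
    refine ((summable_K M hπ (fun x => M.r x.1 x.2) y).mul_left
      (M.p s a y.1 * π y.1 y.2)).congr fun t => ?_
    unfold Kop; ring

lemma eta_V (M : MDP S A) {π : S → A → ℝ} (hπ : IsPolicy π) :
    ηval M π = ∑ s, M.μ0 s * Vval M π s := by
  unfold ηval
  have : ∀ t, M.γ ^ t * ∑ h : Hist S A t, prob M π t h * M.r (lastSA h).1 (lastSA h).2
      = ∑ s, ∑ a, M.μ0 s * π s a * (M.γ ^ t * (Kop M π)^[t] (fun x => M.r x.1 x.2) (s, a)) := by
    intro t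
    rw [sum_prob M π t (fun x => M.r x.1 x.2)]
    simp only [avg, Finset.mul_sum]
    refine Finset.sum_congr rfl fun s' _ => Finset.sum_congr rfl fun a' _ => by ring
  rw [tsum_congr this, Summable.tsum_finsetSum]
  · refine Finset.sum_congr rfl fun s _ => ?_
    rw [Summable.tsum_finsetSum]
    · simp only [Vval, Finset.mul_sum, Qval_eq]
      refine Finset.sum_congr rfl fun a _ => ?_
      rw [tsum_mul_left, mul_assoc]
    · exact fun a _ => (summable_K M hπ _ _).mul_left _
  · exact fun s _ => summable_sum fun a _ => (summable_K M hπ _ _).mul_left _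

lemma summable_mu (M : MDP S A) {π : S → A → ℝ} (hπ : IsPolicy π) (g : S → ℝ) :
    Summable fun t => M.γ ^ t * ∑ s, M.μ0 s * (Top M π)^[t] g s := by
  refine (summable_sum (s := Finset.univ) fun s _ =>
    (summable_T M hπ g s).mul_left (M.μ0 s)).congr fun t => ?_
  rw [Finset.mul_sum]
  exact Finset.sum_congr rfl fun s _ => by ring

lemma sum_prob_T (M : MDP S A) (π : S → A → ℝ) (t : ℕ) (f : S × A → ℝ) :
    ∑ h : Hist S A t, prob M π t h * f (lastSA h)
      = ∑ s, M.μ0 s * (Top M π)^[t] (avg π f) s := by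
  rw [sum_prob, avg_Kop_iter]

lemma avg_state {π : S → A → ℝ} (hπ : IsPolicy π) (g : S → ℝ) :
    avg π (fun x => g x.1) = g := by
  funext s
  simp only [avg, ← Finset.sum_mul, hπ.2, one_mul]

lemma sum_dOcc (M : MDP S A) {π : S → A → ℝ} (hπ : IsPolicy π) (g : S → ℝ) :
    ∑ s, dOcc M π s * g s
      = (1 - M.γ) * ∑' t, M.γ ^ t * ∑ s, M.μ0 s * (Top M π)^[t] g s := by
  have hs : ∀ s, Summable fun t => M.γ ^ t *
    ∑ h : Hist S A t, prob M π t h * (if (lastSA h).1 = s then (1 : ℝ) else 0) := by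
    intro s
    refine (summable_mu M hπ (fun x => if x = s then (1:ℝ) else 0)).congr fun t => ?_
    rw [sum_prob_T M π t (fun x => if x.1 = s then (1:ℝ) else 0),
      avg_state hπ (fun x => if x = s then (1:ℝ) else 0)]
  simp only [dOcc, mul_assoc, ← Finset.mul_sum]
  congr 1
  simp only [← tsum_mul_right]
  rw [← Summable.tsum_finsetSum (fun s _ => (hs s).mul_right _)]
  refine tsum_congr fun t => ?_
  have := sum_prob_T M π t (fun x => g x.1)
  rw [avg_state hπ g] at this
  rw [← this]
  simp only [mul_assoc, ← Finset.mul_sum]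
  congr 1
  simp only [Finset.sum_mul]
  rw [Finset.sum_comm]
  refine Finset.sum_congr rfl fun h _ => ?_
  simp [mul_assoc, ← Finset.mul_sum]

lemma flow (M : MDP S A) {π : S → A → ℝ} (hπ : IsPolicy π) (g : S → ℝ) :
    ∑ s, dOcc M π s * g s
      = (1 - M.γ) * ∑ s, M.μ0 s * g s + M.γ * ∑ s, dOcc M π s * Top M π g s := by
  rw [sum_dOcc M hπ g, sum_dOcc M hπ (Top M π g), tsum_shift M (summable_mu M hπ g)]
  simp only [Function.iterate_succ_apply, Function.iterate_zero, id]
  ring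

lemma eta_d (M : MDP S A) {π : S → A → ℝ} (hπ : IsPolicy π) :
    (1 - M.γ) * ηval M π = ∑ s, dOcc M π s * ∑ a, π s a * M.r s a := by
  rw [sum_dOcc M hπ (fun s => ∑ a, π s a * M.r s a)]
  unfold ηval
  congr 1
  exact tsum_congr fun t => by rw [sum_prob_T M π t (fun x => M.r x.1 x.2)]; rfl

lemma dOcc_nonneg (M : MDP S A) {π : S → A → ℝ} (hπ : IsPolicy π) (s : S) :
    0 ≤ dOcc M π s := by
  unfold dOcc
  refine mul_nonneg (by linarith [M.γ_lt_one]) (tsum_nonneg fun t =>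
    mul_nonneg (pow_nonneg M.γ_pos.le t) (Finset.sum_nonneg fun h _ => mul_nonneg ?_ ?_))
  · exact mul_nonneg (mul_nonneg (M.μ0_nonneg _) (hπ.1 _ _)) (Finset.prod_nonneg fun i _ =>
      mul_nonneg (M.p_nonneg _ _ _) (hπ.1 _ _))
  · split_ifs <;> norm_num

/-- Performance difference lemma. -/
lemma perf_diff (M : MDP S A) {π π' : S → A → ℝ} (hπ : IsPolicy π) (hπ' : IsPolicy π') :
    (1 - M.γ) * (ηval M π' - ηval M π)
      = ∑ s, dOcc M π' s * ∑ a, π' s a * Adv M π s a := by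
  have hA : ∀ s, ∑ a, π' s a * Adv M π s a
      = ∑ a, π' s a * M.r s a + M.γ * Top M π' (Vval M π) s - Vval M π s := by
    intro s
    have h1 : ∀ a, π' s a * Adv M π s a = π' s a * M.r s a
        + M.γ * (π' s a * ∑ s', M.p s a s' * Vval M π s') - π' s a * Vval M π s := by
      intro a
      rw [Adv, Q_bellman M hπ]; ring
    simp only [h1, Finset.sum_sub_distrib, Finset.sum_add_distrib, ← Finset.mul_sum,
      ← Finset.sum_mul, hπ'.2, one_mul, Top]
  have hf := flow M hπ' (Vval M π)
  have he := eta_d M hπ'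
  simp only [hA, mul_sub, mul_add, Finset.sum_sub_distrib, Finset.sum_add_distrib]
  rw [← he, eta_V M hπ, hf, Finset.mul_sum (a := M.γ)]
  simp only [mul_left_comm _ M.γ]
  ring

lemma l1_bound (M : MDP S A) {π π' : S → A → ℝ} (hπ : IsPolicy π) (hπ' : IsPolicy π') :
    (1 - M.γ) * ∑ s, |dOcc M π' s - dOcc M π s|
      ≤ M.γ * ∑ s, dOcc M π s * ∑ a, |π' s a - π s a| := by
  set δ : S → ℝ := fun s => dOcc M π' s - dOcc M π s with hδ
  obtain ⟨σ, hσ, hσ1⟩ : ∃ σ : S → ℝ, (∀ s, |δ s| = δ s * σ s) ∧ ∀ s, |σ s| ≤ 1 := by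
    refine ⟨fun s => if 0 ≤ δ s then 1 else -1, fun s => ?_, fun s => ?_⟩
    · dsimp only
      split_ifs with h
      · rw [abs_of_nonneg h, mul_one]
      · rw [abs_of_neg (not_le.1 h)]; ring
    · dsimp only
      split_ifs <;> simp
  have h1 := flow M hπ' σ
  have h2 := flow M hπ σ
  have e1 : ∑ s, |δ s| = ∑ s, dOcc M π' s * σ s - ∑ s, dOcc M π s * σ s := by
    rw [← Finset.sum_sub_distrib]
    exact Finset.sum_congr rfl fun s _ => by rw [hσ s, hδ]; ring
  have e2 : ∑ s, dOcc M π' s * Top M π' σ s - ∑ s, dOcc M π s * Top M π σ s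
      = ∑ s, δ s * Top M π' σ s + ∑ s, dOcc M π s * (Top M π' σ s - Top M π σ s) := by
    rw [← Finset.sum_sub_distrib, ← Finset.sum_add_distrib]
    exact Finset.sum_congr rfl fun s _ => by rw [hδ]; ring
  have b1 : ∑ s, δ s * Top M π' σ s ≤ ∑ s, |δ s| := Finset.sum_le_sum fun s _ => by
    calc _ ≤ |δ s * Top M π' σ s| := le_abs_self _
      _ = |δ s| * |Top M π' σ s| := abs_mul _ _
      _ ≤ |δ s| * 1 := mul_le_mul_of_nonneg_left (Top_bdd M hπ' hσ1 s) (abs_nonneg _)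
      _ = _ := mul_one _
  have b2 : ∑ s, dOcc M π s * (Top M π' σ s - Top M π σ s)
      ≤ ∑ s, dOcc M π s * ∑ a, |π' s a - π s a| := Finset.sum_le_sum fun s _ => by
    refine mul_le_mul_of_nonneg_left ?_ (dOcc_nonneg M hπ s)
    unfold Top
    rw [← Finset.sum_sub_distrib]
    refine Finset.sum_le_sum fun a _ => ?_
    have hb : |∑ s', M.p s a s' * σ s'| ≤ 1 := by
      calc _ ≤ ∑ s', |M.p s a s' * σ s'| := Finset.abs_sum_le_sum_abs _ _
        _ ≤ ∑ s', M.p s a s' := Finset.sum_le_sum fun s' _ => by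
            rw [abs_mul, abs_of_nonneg (M.p_nonneg _ _ _)]
            exact mul_le_of_le_one_right (M.p_nonneg _ _ _) (hσ1 s')
        _ = 1 := M.p_sum_one s a
    rw [← sub_mul]
    calc _ ≤ |(π' s a - π s a) * ∑ s', M.p s a s' * σ s'| := le_abs_self _
      _ = |π' s a - π s a| * |∑ s', M.p s a s' * σ s'| := abs_mul _ _
      _ ≤ _ := mul_le_of_le_one_right (abs_nonneg _) hb
  have e3 : ∑ s, |δ s| = M.γ * (∑ s, δ s * Top M π' σ s
      + ∑ s, dOcc M π s * (Top M π' σ s - Top M π σ s)) := by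
    rw [← e2, e1, h1, h2]; ring
  have := mul_le_mul_of_nonneg_left (add_le_add b1 b2) M.γ_pos.le
  linarith

/-- Achiam et al. style bound: `|η(π̃) − η(π) − L_π(π̃)| ≤ (2εγ/(1−γ)²) E_{s∼d^π} D_TV(π̃‖π)`
with `ε = max_s |∑_a π̃(a|s) A^π(s,a)|`. -/
theorem surrogate_error_bound_expected_TV
    [Nonempty S]
    (M : MDP S A) (π π' : S → A → ℝ)
    (hπ : IsPolicy π) (hπ' : IsPolicy π')
    (ε : ℝ)
    (hε : ε = Finset.univ.sup' Finset.univ_nonempty fun s => |∑ a, π' s a * Adv M π s a|) :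
    |ηval M π' - ηval M π - Lsur M π π'| ≤
      2 * ε * M.γ / (1 - M.γ) ^ 2 *
        ∑ s, dOcc M π s * ((1 / 2) * ∑ a, |π' s a - π s a|) := by
  have hg : 0 < 1 - M.γ := by linarith [M.γ_lt_one]
  have hpd := perf_diff M hπ hπ'
  have hl := l1_bound M hπ hπ'
  set Ab : S → ℝ := fun s => ∑ a, π' s a * Adv M π s a with hAb
  have hεs : ∀ s, |Ab s| ≤ ε := fun s => by
    rw [hε]
    exact Finset.le_sup' (fun s => |Ab s|) (Finset.mem_univ s)
  have hε0 : 0 ≤ ε := (abs_nonneg _).trans (hεs (Classical.arbitrary S))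
  have e1 : ηval M π' - ηval M π - Lsur M π π'
      = (1 - M.γ)⁻¹ * ∑ s, (dOcc M π' s - dOcc M π s) * Ab s := by
    have : ηval M π' - ηval M π = (1 - M.γ)⁻¹ * ∑ s, dOcc M π' s * Ab s := by
      rw [← hpd]; field_simp
    rw [this, Lsur, ← mul_sub, ← Finset.sum_sub_distrib]
    congr 1
    exact Finset.sum_congr rfl fun s _ => by rw [sub_mul]
  have b1 : |∑ s, (dOcc M π' s - dOcc M π s) * Ab s|
      ≤ (∑ s, |dOcc M π' s - dOcc M π s|) * ε := by
    rw [Finset.sum_mul]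
    refine (Finset.abs_sum_le_sum_abs _ _).trans (Finset.sum_le_sum fun s _ => ?_)
    rw [abs_mul]
    exact mul_le_mul_of_nonneg_left (hεs s) (abs_nonneg _)
  have e2 : ∑ s, dOcc M π s * ((1 / 2) * ∑ a, |π' s a - π s a|)
      = (1 / 2) * ∑ s, dOcc M π s * ∑ a, |π' s a - π s a| := by
    rw [Finset.mul_sum]
    exact Finset.sum_congr rfl fun s _ => by ring
  rw [e1, e2, abs_mul, abs_of_pos (inv_pos.2 hg)]
  set X := ∑ s, |dOcc M π' s - dOcc M π s|
  set Y := ∑ s, dOcc M π s * ∑ a, |π' s a - π s a|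
  have hX : X ≤ (1 - M.γ)⁻¹ * (M.γ * Y) := by
    rw [inv_mul_eq_div, le_div_iff₀ hg]; linarith
  calc _ ≤ (1 - M.γ)⁻¹ * (X * ε) := mul_le_mul_of_nonneg_left b1 (inv_pos.2 hg).le
    _ ≤ (1 - M.γ)⁻¹ * (((1 - M.γ)⁻¹ * (M.γ * Y)) * ε) :=
      mul_le_mul_of_nonneg_left (mul_le_mul_of_nonneg_right hX hε0) (inv_pos.2 hg).le
    _ = _ := by field_simp

end PolicyOpt
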